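/- For every τ in the complex upper half-plane ℍ, one has Σ_{k≥0, k≡4 (mod 8)} c(k)·q^{k−1} = −8·η(16τ)⁸/η(8τ)⁷. (That is, the part of the Fourier expansion of A(τ) = η(4τ)⁸/η(8τ)⁷ = Σ_{n≥−1} a(n)qⁿ supported on exponents n ≡ 3 (mod 8) equals −8·η(16τ)⁸/η(8τ)⁷.) -/

import Mathlib

noncomputable section
open Complex Real

/-- `q = e^{2πiτ}`. -/
def nome (τ : ℂ) : ℂ := Complex.exp (2 * (π : ℂ) * I * τ)

/-- Dedekind dedekindEta function `η(τ) = e^{πiτ/12} ∏_{n≥1} (1 − qⁿ)`. -/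
def dedekindEta (τ : ℂ) : ℂ := Complex.exp ((π : ℂ) * I * τ / 12) * ∏' n : ℕ, (1 - nome τ ^ (n + 1))

open Filter Topology

namespace JT

def PP (y : ℂ) : ℂ := ∏' n : ℕ, (1 - y ^ (n + 1))
def DD (y : ℂ) : ℂ := ∏' n : ℕ, (1 + y ^ (n + 1))
def OO (y : ℂ) : ℂ := ∏' n : ℕ, (1 + y ^ (2 * n + 1))

lemma norm_pow_lt {y : ℂ} (hy : ‖y‖ < 1) {k : ℕ} (hk : k ≠ 0) : ‖y ^ k‖ < 1 := by
  rw [norm_pow]; exact pow_lt_one₀ (norm_nonneg _) hy hk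

lemma summ_aux {y : ℂ} (hy : ‖y‖ < 1) (c : ℂ) (a : ℕ) (b : ℕ) (ha : a ≠ 0) :
    Summable (fun n : ℕ => ‖c * y ^ (a * n + b)‖) := by
  have h : Summable (fun n : ℕ => ‖c * y ^ b‖ * (‖y ^ a‖) ^ n) :=
    (summable_geometric_of_lt_one (norm_nonneg _) (norm_pow_lt hy ha)).mul_left _
  refine h.congr fun n => ?_
  simp only [norm_mul, norm_pow]
  ring

lemma mult_aux {y : ℂ} (hy : ‖y‖ < 1) (c : ℂ) (a : ℕ) (b : ℕ) (ha : a ≠ 0) :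
    Multipliable (fun n : ℕ => 1 + c * y ^ (a * n + b)) :=
  multipliable_one_add_of_summable (summ_aux hy c a b ha)

lemma one_sub_ne {y : ℂ} (hy : ‖y‖ < 1) {k : ℕ} (hk : k ≠ 0) : 1 - y ^ k ≠ 0 := by
  intro h
  have h2 := norm_pow_lt hy hk
  rw [← sub_eq_zero.mp h] at h2
  simp at h2

lemma multP {y : ℂ} (hy : ‖y‖ < 1) : Multipliable (fun n : ℕ => 1 - y ^ (n + 1)) := by
  refine (mult_aux hy (-1) 1 1 one_ne_zero).congr fun n => ?_
  ring

lemma multD {y : ℂ} (hy : ‖y‖ < 1) : Multipliable (fun n : ℕ => 1 + y ^ (n + 1)) := by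
  refine (mult_aux hy 1 1 1 one_ne_zero).congr fun n => ?_
  ring

lemma multO {y : ℂ} (hy : ‖y‖ < 1) : Multipliable (fun n : ℕ => 1 + y ^ (2 * n + 1)) := by
  refine (mult_aux hy 1 2 1 two_ne_zero).congr fun n => ?_
  ring

lemma PP_ne {y : ℂ} (hy : ‖y‖ < 1) : PP y ≠ 0 := by
  have := tprod_one_add_ne_zero_of_summable (f := fun n : ℕ => (-1) * y ^ (1 * n + 1))
    (fun n => by
      have := one_sub_ne hy (Nat.succ_ne_zero n)
      convert this using 1
      simp only [Nat.succ_eq_add_one]; ring) (summ_aux hy (-1) 1 1 one_ne_zero)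
  convert this using 1
  unfold PP
  refine tprod_congr fun n => ?_
  ring

lemma PD {y : ℂ} (hy : ‖y‖ < 1) : PP y * DD y = PP (y ^ 2) := by
  unfold PP DD
  rw [← (multP hy).tprod_mul (multD hy)]
  refine tprod_congr fun n => ?_
  ring

lemma DO {y : ℂ} (hy : ‖y‖ < 1) : OO y * DD (y ^ 2) = DD y := by
  unfold OO DD
  have h2 := norm_pow_lt hy two_ne_zero
  rw [← tprod_even_mul_odd (f := fun n : ℕ => 1 + y ^ (n + 1)) (multO hy)
    ((multD h2).congr fun n => by ring)]
  congr 1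
  refine tprod_congr fun n => ?_
  ring

lemma PO {y : ℂ} (hy : ‖y‖ < 1) : OO y * PP (y ^ 2) = PP (-y) := by
  unfold OO PP
  have h2 := norm_pow_lt hy two_ne_zero
  have e1 : ∀ n : ℕ, 1 + y ^ (2 * n + 1) = 1 - (-y) ^ (2 * n + 1) := fun n => by
    rw [Odd.neg_pow ⟨n, rfl⟩]; ring
  have e2 : ∀ n : ℕ, 1 - (y ^ 2) ^ (n + 1) = 1 - (-y) ^ (2 * n + 1 + 1) := fun n => by
    rw [show 2 * n + 1 + 1 = 2 * (n + 1) by ring, pow_mul, neg_sq]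
  rw [← tprod_even_mul_odd (f := fun n : ℕ => 1 - (-y) ^ (n + 1))
    ((multO hy).congr e1) ((multP h2).congr e2)]
  congr 1
  · exact tprod_congr e1
  · exact tprod_congr e2

/-! ### Triple product -/

def QQ (x : ℂ) (n : ℕ) : ℂ := ∏ i ∈ Finset.range n, (1 - (x ^ 2) ^ (i + 1))

def RR (x : ℂ) (m : ℤ) : ℂ := if 0 ≤ m then (QQ x m.toNat)⁻¹ else 0

lemma QQ_ne {x : ℂ} (hx : ‖x‖ < 1) (n : ℕ) : QQ x n ≠ 0 :=
  Finset.prod_ne_zero_iff.mpr fun i _ => one_sub_ne (norm_pow_lt hx two_ne_zero) (Nat.succ_ne_zero i)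

lemma RR_rec {x : ℂ} (hx : ‖x‖ < 1) (m : ℤ) : RR x (m - 1) = (1 - x ^ (2 * m)) * RR x m := by
  unfold RR
  rcases lt_trichotomy m 0 with h | h | h
  · rw [if_neg (by omega), if_neg (by omega)]; simp
  · subst h; simp
  · rw [if_pos (by omega), if_pos (by omega)]
    obtain ⟨k, rfl⟩ : ∃ k : ℕ, m = k + 1 := ⟨(m - 1).toNat, by omega⟩
    have e1 : ((k : ℤ) + 1 - 1).toNat = k := by omega
    have e2 : ((k : ℤ) + 1).toNat = k + 1 := by omega
    have e3 : x ^ (2 * ((k : ℤ) + 1)) = (x ^ 2) ^ (k + 1) := by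
      rw [← pow_mul, ← zpow_natCast]; push_cast; rfl
    rw [e1, e2, e3]
    have h1 := QQ_ne hx k
    have h2 := one_sub_ne (norm_pow_lt hx two_ne_zero) (Nat.succ_ne_zero k)
    have : QQ x (k + 1) = QQ x k * (1 - (x ^ 2) ^ (k + 1)) := Finset.prod_range_succ _ _
    rw [this]
    simp only [Nat.succ_eq_add_one] at h2
    field_simp

def AA (x : ℂ) (N : ℕ) (j : ℤ) : ℂ := QQ x (2 * N) * RR x (N + j) * RR x (N - j) * x ^ (j ^ 2)

lemma AA_rec {x : ℂ} (hx : ‖x‖ < 1) (h0 : x ≠ 0) (N : ℕ) (j : ℤ) :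
    AA x (N + 1) j = (1 + x ^ (4 * N + 2)) * AA x N j
      + x ^ (2 * N + 1) * (AA x N (j - 1) + AA x N (j + 1)) := by
  unfold AA
  have q1 : QQ x (2 * (N + 1)) = QQ x (2 * N) * (1 - (x ^ N) ^ 4 * x ^ 2) * (1 - (x ^ N) ^ 4 * x ^ 4) := by
    have : 2 * (N + 1) = 2 * N + 1 + 1 := by ring
    rw [this]; unfold QQ
    rw [Finset.prod_range_succ, Finset.prod_range_succ]
    ring
  have r1 : RR x ((N : ℤ) + j) = (1 - x ^ (2 * ((N : ℤ) + 1 + j))) * RR x ((N : ℤ) + 1 + j) := by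
    rw [← RR_rec hx]; congr 1; ring
  have r2 : RR x ((N : ℤ) - j) = (1 - x ^ (2 * ((N : ℤ) + 1 - j))) * RR x ((N : ℤ) + 1 - j) := by
    rw [← RR_rec hx]; congr 1; ring
  have r3 : RR x ((N : ℤ) + (j - 1)) = (1 - x ^ (2 * ((N : ℤ) + j))) * RR x ((N : ℤ) + j) := by
    rw [← RR_rec hx]; congr 1; ring
  have r4 : RR x ((N : ℤ) - (j + 1)) = (1 - x ^ (2 * ((N : ℤ) - j))) * RR x ((N : ℤ) - j) := by
    rw [← RR_rec hx]; congr 1; ring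
  have s1 : (N : ℤ) - (j - 1) = N + 1 - j := by ring
  have s2 : (N : ℤ) + (j + 1) = N + 1 + j := by ring
  have hN : x ^ N ≠ 0 := pow_ne_zero _ h0
  have hj : x ^ j ≠ 0 := zpow_ne_zero _ h0
  have t1 : x ^ (2 * ((N : ℤ) + 1 + j)) = (x ^ N) ^ 2 * x ^ 2 * (x ^ j) ^ 2 := by
    rw [show 2 * ((N : ℤ) + 1 + j) = N + N + 1 + 1 + j + j by ring]
    simp only [zpow_add₀ h0, zpow_natCast, zpow_one]; ring
  have t2 : x ^ (2 * ((N : ℤ) + 1 - j)) = (x ^ N) ^ 2 * x ^ 2 / (x ^ j) ^ 2 := by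
    rw [show 2 * ((N : ℤ) + 1 - j) = N + N + 1 + 1 - j - j by ring]
    simp only [zpow_add₀ h0, zpow_sub₀ h0, zpow_natCast, zpow_one]; field_simp
  have t3 : x ^ (2 * ((N : ℤ) + j)) = (x ^ N) ^ 2 * (x ^ j) ^ 2 := by
    rw [show 2 * ((N : ℤ) + j) = N + N + j + j by ring]
    simp only [zpow_add₀ h0, zpow_natCast]; ring
  have t4 : x ^ (2 * ((N : ℤ) - j)) = (x ^ N) ^ 2 / (x ^ j) ^ 2 := by
    rw [show 2 * ((N : ℤ) - j) = N + N - j - j by ring]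
    simp only [zpow_add₀ h0, zpow_sub₀ h0, zpow_natCast]; field_simp
  have t5 : x ^ ((j - 1) ^ 2) = x ^ (j ^ 2) * x / (x ^ j) ^ 2 := by
    rw [show (j - 1) ^ 2 = j ^ 2 + 1 - j - j by ring]
    simp only [zpow_add₀ h0, zpow_sub₀ h0, zpow_one]; field_simp
  have t6 : x ^ ((j + 1) ^ 2) = x ^ (j ^ 2) * x * (x ^ j) ^ 2 := by
    rw [show (j + 1) ^ 2 = j ^ 2 + 1 + j + j by ring]
    simp only [zpow_add₀ h0, zpow_one]; ring
  have t7 : x ^ (4 * N + 2) = (x ^ N) ^ 4 * x ^ 2 := by ring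
  have t8 : x ^ (2 * N + 1) = (x ^ N) ^ 2 * x := by ring
  push_cast
  rw [q1, s1, s2, r3, r4, r1, r2, t1, t2, t3, t4, t5, t6, t7, t8]
  generalize x ^ (j ^ 2) = J
  generalize RR x ((N : ℤ) + 1 + j) = u
  generalize RR x ((N : ℤ) + 1 - j) = v
  generalize x ^ N = X at *
  generalize x ^ j = y at *
  field_simp
  ring

def FF (x z : ℂ) (N : ℕ) : ℂ :=
  (∏ i ∈ Finset.range N, (1 + z * x ^ (2 * i + 1))) * (∏ i ∈ Finset.range N, (1 + z⁻¹ * x ^ (2 * i + 1)))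

lemma finite_triple {x z : ℂ} (hx : ‖x‖ < 1) (h0 : x ≠ 0) (hz : z ≠ 0) (N : ℕ) :
    HasSum (fun j : ℤ => AA x N j * z ^ j) (FF x z N) := by
  induction N with
  | zero =>
    have : FF x z 0 = AA x 0 0 * z ^ (0 : ℤ) := by simp [FF, AA, QQ, RR]
    rw [this]
    refine hasSum_single 0 fun j hj => ?_
    rcases lt_or_gt_of_ne hj with h | h
    · simp [AA, RR, h.not_ge]
    · simp [AA, RR, h.not_ge]
  | succ N ih =>
    have e1 : HasSum (fun j : ℤ => AA x N (j - 1) * z ^ (j - 1)) (FF x z N) :=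
      (Equiv.subRight (1 : ℤ)).hasSum_iff (f := fun j : ℤ => AA x N j * z ^ j) |>.mpr ih
    have e2 : HasSum (fun j : ℤ => AA x N (j + 1) * z ^ (j + 1)) (FF x z N) :=
      (Equiv.addRight (1 : ℤ)).hasSum_iff (f := fun j : ℤ => AA x N j * z ^ j) |>.mpr ih
    have := ((ih.mul_left (1 + x ^ (4 * N + 2))).add (e1.mul_left (x ^ (2 * N + 1) * z))).add
      (e2.mul_left (x ^ (2 * N + 1) * z⁻¹))
    have hf : (fun j : ℤ => AA x (N + 1) j * z ^ j) = fun b : ℤ =>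
        (1 + x ^ (4 * N + 2)) * (AA x N b * z ^ b)
          + x ^ (2 * N + 1) * z * (AA x N (b - 1) * z ^ (b - 1))
          + x ^ (2 * N + 1) * z⁻¹ * (AA x N (b + 1) * z ^ (b + 1)) := by
      funext j
      rw [AA_rec hx h0, zpow_add₀ hz, zpow_sub₀ hz, zpow_one]
      field_simp
      ring
    have hF : FF x z (N + 1) = (1 + x ^ (4 * N + 2)) * FF x z N
        + x ^ (2 * N + 1) * z * FF x z N + x ^ (2 * N + 1) * z⁻¹ * FF x z N := by
      unfold FF
      rw [Finset.prod_range_succ, Finset.prod_range_succ]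
      generalize (∏ i ∈ Finset.range N, (1 + z * x ^ (2 * i + 1))) = u
      generalize (∏ i ∈ Finset.range N, (1 + z⁻¹ * x ^ (2 * i + 1))) = v
      field_simp
      ring
    rw [hf, hF]
    exact this

lemma summ_theta {x z : ℂ} (hx : ‖x‖ < 1) (h0 : x ≠ 0) (hz : z ≠ 0) :
    Summable (fun j : ℤ => x ^ (j ^ 2) * z ^ j) := by
  have h := (summable_jacobiTheta₂_term_iff (Complex.log z / (2 * π * I)) (Complex.log x / (π * I))).mpr ?_
  · refine h.congr fun j => ?_
    have hpi : (π : ℂ) ≠ 0 := by exact_mod_cast Real.pi_ne_zero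
    have hI := Complex.I_ne_zero
    have : 2 * π * I * j * (Complex.log z / (2 * π * I)) + π * I * j ^ 2 * (Complex.log x / (π * I))
        = (j : ℂ) * Complex.log z + ((j ^ 2 : ℤ) : ℂ) * Complex.log x := by
      push_cast
      field_simp
    rw [jacobiTheta₂_term, this, Complex.exp_add, Complex.exp_int_mul, Complex.exp_int_mul,
      Complex.exp_log hz, Complex.exp_log h0, mul_comm]
  · have : Complex.log x / (π * I) = ((-1 / π : ℝ) : ℂ) * Complex.log x * I := by
      have hpi : (π : ℂ) ≠ 0 := by exact_mod_cast Real.pi_ne_zero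
      push_cast
      field_simp
      simp
    rw [this, Complex.mul_I_im, Complex.re_ofReal_mul, Complex.log_re]
    have : Real.log ‖x‖ < 0 := Real.log_neg (norm_pos_iff.mpr h0) hx
    have hp := Real.pi_pos
    have : -1 / π < 0 := by apply div_neg_of_neg_of_pos <;> linarith
    nlinarith

lemma bounded_of_tendsto {f : ℕ → ℂ} {l : ℂ} (h : Tendsto f atTop (𝓝 l)) :
    ∃ C : ℝ, 0 ≤ C ∧ ∀ n, ‖f n‖ ≤ C := by
  obtain ⟨C, hC⟩ := (Metric.isBounded_range_of_tendsto f h).exists_norm_le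
  exact ⟨C, (norm_nonneg _).trans (hC _ ⟨0, rfl⟩), fun n => hC _ ⟨n, rfl⟩⟩

lemma triple {x z : ℂ} (hx : ‖x‖ < 1) (h0 : x ≠ 0) (hz : z ≠ 0) :
    ∑' j : ℤ, x ^ (j ^ 2) * z ^ j =
      PP (x ^ 2) * (∏' n : ℕ, (1 + z * x ^ (2 * n + 1))) * (∏' n : ℕ, (1 + z⁻¹ * x ^ (2 * n + 1))) := by
  have hx2 := norm_pow_lt hx two_ne_zero
  have hP := PP_ne hx2
  have hQ : Tendsto (QQ x) atTop (𝓝 (PP (x ^ 2))) := (multP hx2).hasProd.tendsto_prod_nat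
  have hQi : Tendsto (fun n => (QQ x n)⁻¹) atTop (𝓝 (PP (x ^ 2))⁻¹) := hQ.inv₀ hP
  obtain ⟨C, hC0, hC⟩ := bounded_of_tendsto hQ
  obtain ⟨D, hD0, hD⟩ := bounded_of_tendsto hQi
  have hR : Tendsto (RR x) atTop (𝓝 (PP (x ^ 2))⁻¹) := by
    have ht : Tendsto Int.toNat atTop atTop := by
      refine tendsto_atTop.mpr fun b => ?_
      filter_upwards [eventually_ge_atTop (b : ℤ)] with a ha
      omega
    refine (hQi.comp ht).congr' ?_
    filter_upwards [eventually_ge_atTop (0 : ℤ)] with a ha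
    simp [RR, ha]
  have hRb : ∀ m, ‖RR x m‖ ≤ D := by
    intro m
    unfold RR
    split_ifs
    · exact hD _
    · simpa using hD0
  have hF : Tendsto (FF x z) atTop (𝓝 ((∏' n : ℕ, (1 + z * x ^ (2 * n + 1))) *
      (∏' n : ℕ, (1 + z⁻¹ * x ^ (2 * n + 1))))) :=
    (mult_aux hx z 2 1 two_ne_zero).hasProd.tendsto_prod_nat.mul
      (mult_aux hx z⁻¹ 2 1 two_ne_zero).hasProd.tendsto_prod_nat
  have hT : Tendsto (fun N => ∑' j : ℤ, AA x N j * z ^ j) atTop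
      (𝓝 (∑' j : ℤ, (PP (x ^ 2))⁻¹ * (x ^ (j ^ 2) * z ^ j))) := by
    refine tendsto_tsum_of_dominated_convergence
      (bound := fun j : ℤ => C * D * D * ‖x ^ (j ^ 2) * z ^ j‖)
      ((summ_theta hx h0 hz).norm.mul_left _) (fun j => ?_) (Eventually.of_forall fun N j => ?_)
    · have n1 : Tendsto (fun N : ℕ => (N : ℤ) + j) atTop atTop :=
        tendsto_atTop_add_const_right _ _ tendsto_natCast_atTop_atTop
      have n2 : Tendsto (fun N : ℕ => (N : ℤ) - j) atTop atTop :=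
        tendsto_atTop_add_const_right _ (-j) tendsto_natCast_atTop_atTop
      have n3 : Tendsto (fun N : ℕ => 2 * N) atTop atTop :=
        tendsto_id.const_mul_atTop' two_pos
      have := ((((hQ.comp n3).mul (hR.comp n1)).mul (hR.comp n2)).mul_const (x ^ (j ^ 2))).mul_const (z ^ j)
      have e : (PP (x ^ 2))⁻¹ * (x ^ (j ^ 2) * z ^ j)
          = PP (x ^ 2) * (PP (x ^ 2))⁻¹ * (PP (x ^ 2))⁻¹ * x ^ (j ^ 2) * z ^ j := by
        rw [mul_inv_cancel₀ hP]; ring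
      rw [e]
      exact this
    · unfold AA
      rw [mul_assoc _ (x ^ (j ^ 2)), norm_mul, norm_mul, norm_mul]
      gcongr
      · exact hC _
      · exact hRb _
      · exact hRb _
  have hT' : Tendsto (FF x z) atTop
      (𝓝 (∑' j : ℤ, (PP (x ^ 2))⁻¹ * (x ^ (j ^ 2) * z ^ j))) :=
    hT.congr fun N => (finite_triple hx h0 hz N).tsum_eq
  have := tendsto_nhds_unique hF hT'
  rw [tsum_mul_left] at this
  rw [mul_assoc, this]
  field_simp

def phi (x : ℂ) : ℂ := ∑' j : ℤ, x ^ (j ^ 2)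
def TT (x : ℂ) : ℂ := ∑' j : ℤ, x ^ (j ^ 2) * x ^ j

lemma phi_summ {x : ℂ} (hx : ‖x‖ < 1) (h0 : x ≠ 0) : Summable (fun j : ℤ => x ^ (j ^ 2)) := by
  simpa using summ_theta hx h0 one_ne_zero

lemma phi_prod {x : ℂ} (hx : ‖x‖ < 1) (h0 : x ≠ 0) : phi x = PP (x ^ 2) * OO x ^ 2 := by
  have := triple hx h0 one_ne_zero
  simp only [one_zpow, mul_one, inv_one, one_mul] at this
  rw [phi, this, OO]
  ring

lemma two_DD {y : ℂ} (hy : ‖y‖ < 1) : ∏' n : ℕ, (1 + y ^ n) = 2 * DD y := by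
  obtain ⟨f, hf⟩ : ∃ f : ℕ → ℂ, f = fun n => 1 + y ^ n := ⟨_, rfl⟩
  have h : HasProd (fun n => f (n + 1)) (DD y) := by
    rw [hf]
    exact (multD hy).hasProd
  have h2 := h.zero_mul.tprod_eq
  rw [hf] at h2
  rw [h2]
  beta_reduce
  rw [pow_zero, one_add_one_eq_two]

lemma TT_prod {x : ℂ} (hx : ‖x‖ < 1) (h0 : x ≠ 0) : TT x = 2 * PP (x ^ 2) * DD (x ^ 2) ^ 2 := by
  have h2 := norm_pow_lt hx two_ne_zero
  have := triple hx h0 h0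
  rw [TT, this]
  have e1 : ∏' n : ℕ, (1 + x * x ^ (2 * n + 1)) = DD (x ^ 2) := by
    unfold DD
    refine tprod_congr fun n => ?_
    ring
  have e2 : ∏' n : ℕ, (1 + x⁻¹ * x ^ (2 * n + 1)) = 2 * DD (x ^ 2) := by
    have : ∀ n : ℕ, 1 + x⁻¹ * x ^ (2 * n + 1) = 1 + (x ^ 2) ^ n := fun n => by
      field_simp; ring
    rw [tprod_congr this, two_DD h2]
  rw [e1, e2]
  ring

lemma neg_zpow_sq {x : ℂ} (j : ℤ) : (-x) ^ (j ^ 2) = (-1) ^ j * x ^ (j ^ 2) := by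
  rcases Int.even_or_odd j with h | h
  · rw [Even.neg_zpow (h.pow_of_ne_zero two_ne_zero), h.neg_one_zpow, one_mul]
  · rw [Odd.neg_zpow h.pow, h.neg_one_zpow]; ring

lemma phi_add {x : ℂ} (hx : ‖x‖ < 1) (h0 : x ≠ 0) : phi x + phi (-x) = 2 * phi (x ^ 4) := by
  have z4 : x ^ (4 : ℤ) = x ^ 4 := by norm_cast
  have s1 := phi_summ hx h0
  have s2 := phi_summ (x := -x) (by simpa using hx) (neg_ne_zero.mpr h0)
  unfold phi
  rw [← s1.tsum_add s2, ← tsum_mul_left]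
  have inj : Function.Injective (fun m : ℤ => 2 * m) := fun a b h => by simp at h; omega
  rw [← inj.tsum_eq]
  · refine tsum_congr fun m => ?_
    rw [neg_zpow_sq, (even_two_mul m).neg_one_zpow, show (2 * m) ^ 2 = 4 * m ^ 2 by ring, zpow_mul]
    rw [z4]
    ring
  · intro j hj
    rcases Int.even_or_odd' j with ⟨k, h | h⟩
    · exact ⟨k, h.symm⟩
    · exfalso
      apply hj
      have : Odd j := ⟨k, h⟩
      simp only [neg_zpow_sq, this.neg_one_zpow]
      ring

lemma phi_sub {x : ℂ} (hx : ‖x‖ < 1) (h0 : x ≠ 0) : phi x - phi (-x) = 2 * x * TT (x ^ 4) := by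
  have z4 : x ^ (4 : ℤ) = x ^ 4 := by norm_cast
  have s1 := phi_summ hx h0
  have s2 := phi_summ (x := -x) (by simpa using hx) (neg_ne_zero.mpr h0)
  unfold phi TT
  rw [← s1.tsum_sub s2, ← tsum_mul_left]
  have inj : Function.Injective (fun m : ℤ => 2 * m + 1) := fun a b h => by simp at h; omega
  rw [← inj.tsum_eq]
  · refine tsum_congr fun m => ?_
    rw [neg_zpow_sq, (odd_two_mul_add_one m).neg_one_zpow,
      show (2 * m + 1) ^ 2 = 4 * m ^ 2 + 4 * m + 1 by ring, zpow_add₀ h0, zpow_add₀ h0,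
      zpow_mul, zpow_mul, zpow_one]
    rw [z4]
    ring
  · intro j hj
    rcases Int.even_or_odd' j with ⟨k, h | h⟩
    · exfalso
      apply hj
      have : Even j := ⟨k, by omega⟩
      simp only [neg_zpow_sq, this.neg_one_zpow]
      ring
    · exact ⟨k, h.symm⟩

lemma phi_sq_eq {x : ℂ} (hx : ‖x‖ < 1) (h0 : x ≠ 0) :
    HasSum (fun p : ℤ × ℤ => x ^ (p.1 ^ 2) * x ^ (p.2 ^ 2)) (phi x ^ 2) := by
  have s1 := (phi_summ hx h0).norm
  have := (summable_mul_of_summable_norm s1 s1).hasSum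
  rwa [← tsum_mul_tsum_of_summable_norm s1 s1, ← sq] at this

lemma phi_sq {x : ℂ} (hx : ‖x‖ < 1) (h0 : x ≠ 0) :
    phi x ^ 2 + phi (-x) ^ 2 = 2 * phi (x ^ 2) ^ 2 := by
  have s1 := phi_sq_eq hx h0
  have s2 := phi_sq_eq (x := -x) (by simpa using hx) (neg_ne_zero.mpr h0)
  have s3 := phi_sq_eq (norm_pow_lt hx two_ne_zero) (pow_ne_zero 2 h0)
  rw [← (s1.add s2).tsum_eq, ← (s3.mul_left 2).tsum_eq]
  have inj : Function.Injective (fun p : ℤ × ℤ => (p.1 + p.2, p.1 - p.2)) := by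
    rintro ⟨a, b⟩ ⟨c, d⟩ h
    simp only [Prod.mk.injEq] at h ⊢
    omega
  rw [← inj.tsum_eq]
  · refine tsum_congr fun p => ?_
    obtain ⟨m, n⟩ := p
    have hm1 : (-1 : ℂ) ≠ 0 := by norm_num
    have e1 : x ^ ((m + n) ^ 2) * x ^ ((m - n) ^ 2) = (x ^ 2) ^ (m ^ 2) * (x ^ 2) ^ (n ^ 2) := by
      rw [← zpow_add₀ h0, ← zpow_add₀ (pow_ne_zero 2 h0), ← zpow_natCast x 2, ← zpow_mul]
      congr 1
      push_cast
      ring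
    have e2 : (-1 : ℂ) ^ (m + n) * (-1) ^ (m - n) = 1 := by
      rw [← zpow_add₀ hm1]
      exact Even.neg_one_zpow ⟨m, by ring⟩
    simp only [neg_zpow_sq]
    linear_combination 2 * e1 + x ^ ((m + n) ^ 2) * x ^ ((m - n) ^ 2) * e2
  · rintro ⟨a, b⟩ hj
    rcases Int.even_or_odd' (a + b) with ⟨k, h | h⟩
    · refine ⟨(k, a - k), ?_⟩
      simp only [Prod.mk.injEq]
      omega
    · exfalso
      apply hj
      have hm1 : (-1 : ℂ) ≠ 0 := by norm_num
      have e2 : (-1 : ℂ) ^ a * (-1) ^ b = -1 := by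
        rw [← zpow_add₀ hm1]
        exact Odd.neg_one_zpow ⟨k, h⟩
      simp only [neg_zpow_sq]
      linear_combination x ^ (a ^ 2) * x ^ (b ^ 2) * e2

lemma aequatio {x : ℂ} (hx : ‖x‖ < 1) (h0 : x ≠ 0) :
    PP x ^ 8 - PP (-x) ^ 8 = -16 * x * PP (x ^ 4) ^ 8 := by
  have h2 := norm_pow_lt hx (k := 2) (by norm_num)
  have h4 := norm_pow_lt hx (k := 4) (by norm_num)
  have h8 := norm_pow_lt hx (k := 8) (by norm_num)
  have h16 := norm_pow_lt hx (k := 16) (by norm_num)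
  have hn : ‖-x‖ < 1 := by simpa using hx
  have a1 := phi_add hx h0
  have a2 := phi_sub hx h0
  have a3 := phi_sq hx h0
  have b1 := PO hx
  have b2 := PO hn
  rw [neg_sq, neg_neg] at b2
  have c1 := phi_prod hx h0
  have c2 := phi_prod hn (neg_ne_zero.mpr h0)
  rw [neg_sq] at c2
  have c3 := phi_prod h2 (pow_ne_zero 2 h0)
  have c4 := phi_prod h4 (pow_ne_zero 4 h0)
  have c5 := TT_prod h4 (pow_ne_zero 4 h0)
  have d1 := PD h2
  have d2 := PD h4
  have d3 := PD h8
  have e1 := DO h2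
  have e2 := DO h4
  simp only [← pow_mul] at *
  norm_num at c3 c4 c5 d1 d2 d3 e1 e2
  have n1 := PP_ne h2
  have n2 := PP_ne h4
  have n3 := PP_ne h8
  have n4 := PP_ne h16
  -- express everything through `PP`
  have f1 : DD (x ^ 2) = PP (x ^ 4) / PP (x ^ 2) := by rw [← d1]; field_simp
  have f2 : DD (x ^ 4) = PP (x ^ 8) / PP (x ^ 4) := by rw [← d2]; field_simp
  have f3 : DD (x ^ 8) = PP (x ^ 16) / PP (x ^ 8) := by rw [← d3]; field_simp
  rw [f1, f2] at e1
  rw [f2, f3] at e2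
  rw [f3] at c5
  have g1 : OO (x ^ 2) = PP (x ^ 4) ^ 2 / (PP (x ^ 2) * PP (x ^ 8)) := by
    field_simp at e1 ⊢
    linear_combination e1
  have g2 : OO (x ^ 4) = PP (x ^ 8) ^ 2 / (PP (x ^ 4) * PP (x ^ 16)) := by
    field_simp at e2 ⊢
    linear_combination e2
  rw [g1] at c3
  rw [g2] at c4
  have key : phi x ^ 4 - phi (-x) ^ 4 = 16 * x * (PP (x ^ 4) ^ 8 / PP (x ^ 2) ^ 4) := by
    have : phi x ^ 4 - phi (-x) ^ 4
        = (phi x ^ 2 + phi (-x) ^ 2) * (phi x + phi (-x)) * (phi x - phi (-x)) := by ring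
    rw [this, a1, a2, a3, c3, c4, c5]
    field_simp
    ring
  rw [c1, c2] at key
  rw [← b1, ← b2]
  field_simp at key
  linear_combination -key

end JT

open JT in
lemma eta_eq (τ : ℂ) (k : ℕ) :
    dedekindEta (k * τ) = Complex.exp ((π : ℂ) * I * (k * τ) / 12) * PP (nome τ ^ k) := by
  have : nome (k * τ) = nome τ ^ k := by
    unfold nome
    rw [← Complex.exp_nat_mul]
    congr 1
    ring
  unfold dedekindEta PP
  rw [this]

lemma nome_ne (τ : ℂ) : nome τ ≠ 0 := Complex.exp_ne_zero _

lemma nome_norm {τ : ℂ} (hτ : 0 < τ.im) : ‖nome τ‖ < 1 := by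
  unfold nome
  rw [Complex.norm_exp, Real.exp_lt_one_iff]
  have : 2 * (π : ℂ) * I * τ = ((2 * π : ℝ) : ℂ) * τ * I := by push_cast; ring
  rw [this, Complex.mul_I_re, Complex.im_ofReal_mul]
  have := Real.pi_pos
  have : 0 < 2 * π * τ.im := by positivity
  linarith

open JT in
lemma F_eq (τ : ℂ) :
    nome τ * (dedekindEta (4 * τ) ^ 8 / dedekindEta (8 * τ) ^ 7)
      = PP (nome τ ^ 4) ^ 8 / PP (nome τ ^ 8) ^ 7 := by
  have h4 := eta_eq τ 4
  have h8 := eta_eq τ 8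
  push_cast at h4 h8
  rw [h4, h8]
  have e : nome τ * Complex.exp ((π : ℂ) * I * (4 * τ) / 12) ^ 8
      = Complex.exp ((π : ℂ) * I * (8 * τ) / 12) ^ 7 := by
    unfold nome
    rw [← Complex.exp_nat_mul, ← Complex.exp_nat_mul, ← Complex.exp_add]
    congr 1
    push_cast
    ring
  have hne : Complex.exp ((π : ℂ) * I * (8 * τ) / 12) ^ 7 ≠ 0 := pow_ne_zero _ (Complex.exp_ne_zero _)
  rw [mul_pow, mul_pow, ← mul_div_assoc, ← mul_assoc, e, mul_div_mul_left _ _ hne]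

lemma filter_sum (ζ : ℂ) (hζ : IsPrimitiveRoot ζ 8) (h4 : ζ ^ 4 = -1) (k : ℕ) :
    ∑ j ∈ Finset.range 8, (-1 : ℂ) ^ j * (ζ ^ j) ^ k = if k % 8 = 4 then 8 else 0 := by
  have e : ∀ j ∈ Finset.range 8, (-1 : ℂ) ^ j * (ζ ^ j) ^ k = (-ζ ^ k) ^ j := fun j _ => by
    rw [neg_pow (ζ ^ k), ← pow_mul, ← pow_mul, mul_comm j k]
  rw [Finset.sum_congr rfl e]
  have h8 : (-ζ ^ k) ^ 8 = 1 := by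
    rw [Even.neg_pow (by decide), ← pow_mul, mul_comm, pow_mul, hζ.pow_eq_one, one_pow]
  have iff1 : k % 8 = 4 ↔ -ζ ^ k = 1 := by
    have hk : ζ ^ k = ζ ^ (k % 8) := by
      conv_lhs => rw [← Nat.div_add_mod k 8, pow_add, pow_mul, hζ.pow_eq_one, one_pow, one_mul]
    rw [neg_eq_iff_eq_neg, ← h4, hk]
    exact ⟨fun h => by rw [h], fun h => hζ.pow_inj (Nat.mod_lt _ (by norm_num)) (by norm_num) h⟩
  split_ifs with h
  · rw [iff1.mp h]; simp
  · have hne : -ζ ^ k - 1 ≠ 0 := fun h' => h (iff1.mpr (sub_eq_zero.mp h'))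
    have := mul_neg_geom_sum (-ζ ^ k) 8
    rw [h8, sub_self] at this
    rcases mul_eq_zero.mp this with h' | h'
    · exact absurd (by linear_combination -h') hne
    · exact h'

/-- let `c : ℕ → ℤ` be the coefficient sequence of the formal power series
`∏(1−X^{4n})⁸/∏(1−X^{8n})⁷`, characterized by `η(4τ)⁸/η(8τ)⁷ = Σ_{k≥0} c(k) q^{k−1}` on ℍ.
Then `Σ_{k≥0, k≡4 (8)} c(k) q^{k−1} = −8 η(16τ)⁸/η(8τ)⁷` for all `τ ∈ ℍ`. -/
theorem stmt6 (c : ℕ → ℤ)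
    (hc : ∀ τ : ℂ, 0 < τ.im →
      HasSum (fun k : ℕ => (c k : ℂ) * nome τ ^ k) (nome τ * (dedekindEta (4 * τ) ^ 8 / dedekindEta (8 * τ) ^ 7)))
    (τ : ℂ) (hτ : 0 < τ.im) :
    (nome τ)⁻¹ * ∑' k : ℕ, (if k % 8 = 4 then (c k : ℂ) else 0) * nome τ ^ k =
      -8 * dedekindEta (16 * τ) ^ 8 / dedekindEta (8 * τ) ^ 7 := by
  have h0 := nome_ne τ
  have hq := nome_norm hτ
  obtain ⟨ζ, hζdef⟩ : ∃ ζ : ℂ, ζ = Complex.exp (2 * π * I / 8) := ⟨_, rfl⟩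
  have hζ : IsPrimitiveRoot ζ 8 := by
    rw [hζdef]
    exact_mod_cast Complex.isPrimitiveRoot_exp 8 (by norm_num)
  have hζ4 : ζ ^ 4 = -1 := by
    rw [hζdef, ← Complex.exp_nat_mul, ← Complex.exp_pi_mul_I]
    congr 1
    push_cast
    ring
  have hζ8 : ζ ^ 8 = 1 := hζ.pow_eq_one
  have hshift : ∀ j : ℕ, nome (τ + j / 8) = ζ ^ j * nome τ := fun j => by
    unfold nome
    rw [hζdef, ← Complex.exp_nat_mul, ← Complex.exp_add]
    congr 1
    ring
  have hs : ∀ j : ℕ, HasSum (fun k : ℕ => (-1 : ℂ) ^ j * ((c k : ℂ) * (ζ ^ j * nome τ) ^ k))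
      ((-1 : ℂ) ^ j * (JT.PP ((-1) ^ j * nome τ ^ 4) ^ 8 / JT.PP (nome τ ^ 8) ^ 7)) := fun j => by
    have him : 0 < (τ + (j : ℂ) / 8).im := by
      have : ((j : ℂ) / 8) = ((j / 8 : ℝ) : ℂ) := by push_cast; rfl
      rw [Complex.add_im, this, Complex.ofReal_im, add_zero]
      exact hτ
    have h := hc _ him
    rw [F_eq, hshift] at h
    have p4 : (ζ ^ j * nome τ) ^ 4 = (-1) ^ j * nome τ ^ 4 := by
      rw [mul_pow, ← pow_mul, mul_comm j, pow_mul, hζ4]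
    have p8 : (ζ ^ j * nome τ) ^ 8 = nome τ ^ 8 := by
      rw [mul_pow, ← pow_mul, mul_comm j, pow_mul, hζ8, one_pow, one_mul]
    rw [p4, p8] at h
    exact h.mul_left _
  have hsum := hasSum_sum (s := Finset.range 8) (fun j _ => hs j)
  have hf : (fun k : ℕ => ∑ j ∈ Finset.range 8, (-1 : ℂ) ^ j * ((c k : ℂ) * (ζ ^ j * nome τ) ^ k))
      = fun k : ℕ => 8 * ((if k % 8 = 4 then (c k : ℂ) else 0) * nome τ ^ k) := by
    funext k
    have e : ∀ j ∈ Finset.range 8, (-1 : ℂ) ^ j * ((c k : ℂ) * (ζ ^ j * nome τ) ^ k)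
        = ((-1 : ℂ) ^ j * (ζ ^ j) ^ k) * ((c k : ℂ) * nome τ ^ k) := fun j _ => by
      rw [mul_pow]; ring
    rw [Finset.sum_congr rfl e, ← Finset.sum_mul, filter_sum ζ hζ hζ4]
    split_ifs <;> ring
  rw [hf] at hsum
  have h1 := hsum.tsum_eq
  rw [tsum_mul_left] at h1
  have hx := JT.norm_pow_lt hq (k := 4) (by norm_num)
  have hx8 := JT.norm_pow_lt hq (k := 8) (by norm_num)
  have key := JT.aequatio hx (pow_ne_zero 4 h0)
  rw [← pow_mul] at key
  norm_num at key
  have n8 := JT.PP_ne hx8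
  simp only [Finset.sum_range_succ, Finset.sum_range_zero] at h1
  norm_num at h1
  have h2 : ∑' k : ℕ, (if k % 8 = 4 then (c k : ℂ) else 0) * nome τ ^ k
      = -8 * nome τ ^ 4 * JT.PP (nome τ ^ 16) ^ 8 / JT.PP (nome τ ^ 8) ^ 7 := by
    have : ∑' k : ℕ, (if k % 8 = 4 then (c k : ℂ) else 0) * nome τ ^ k
        = (JT.PP (nome τ ^ 4) ^ 8 - JT.PP (-nome τ ^ 4) ^ 8) / 2 / JT.PP (nome τ ^ 8) ^ 7 := by
      simp only [ite_mul, zero_mul]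
      linear_combination h1 / 8
    rw [this, key]
    ring
  rw [h2]
  have h16 := eta_eq τ 16
  have h8 := eta_eq τ 8
  push_cast at h16 h8
  rw [h16, h8]
  have e : Complex.exp ((π : ℂ) * I * (16 * τ) / 12) ^ 8
      = nome τ ^ 3 * Complex.exp ((π : ℂ) * I * (8 * τ) / 12) ^ 7 := by
    unfold nome
    rw [← Complex.exp_nat_mul, ← Complex.exp_nat_mul, ← Complex.exp_nat_mul, ← Complex.exp_add]
    congr 1
    push_cast
    ring
  have hne : Complex.exp ((π : ℂ) * I * (8 * τ) / 12) ≠ 0 := Complex.exp_ne_zero _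
  generalize Complex.exp ((π : ℂ) * I * (8 * τ) / 12) = A at *
  generalize Complex.exp ((π : ℂ) * I * (16 * τ) / 12) = B at *
  field_simp
  linear_combination JT.PP (nome τ ^ 16) ^ 8 * e
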